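/- Fix r_1 < ... < r_k. The function n ↦ |Betti(M_n)| is r_k-periodic for n > r_k²: for all n > r_k² with M_n and M_{n+r_k} primitive, |Betti(M_{n+r_k})| = |Betti(M_n)|. -/

import Mathlib

/-!
Put `R = r_k`. Any `R` summands of a factorization other than `n` and `n + R` contain a nonempty
subfamily whose offsets add up to a multiple of `R`, and it can be traded for copies of `n` and
`n + R` without changing the element or the length. Hence a factorization can be replaced by one of
the same length that shares a generator with it and has at most `R` summands other than `n` and
`n + R`. If it is not of maximal length and `n > R ^ 2 - R`, the replacement contains `n + R`; if it
is not of minimal length, the replacement contains `n`.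

So the factorizations of an element that are not of maximal length are all linked, and so are those
not of minimal length. The factorizations of a Betti element therefore have at most two lengths,
`L` and `L + l`, and it can be written as `(L + l) * n + w`. If `l = 0`, disconnectedness is a
condition on `(L, w)` alone. If `l > 0`, it says that no generator occurs at both lengths and that
no length strictly in between occurs. Let `i + j = l`. Adding `i` copies of the smallest and `j`
copies of the largest generator turns a factorization of length `L + i` for `(n, L, w, l)` into one
of length `L + l + i` for `(n + R, L + l, w, l)`, and by the first paragraph this can be undone
after a replacement. So the same generators occur at corresponding lengths, and
`(L, w, l) ↦ (L + l, w, l)` is a bijection between the Betti elements.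
-/

open Finset

/-- Length of a factorization. -/
def vlen {m : ℕ} (z : Fin m → ℕ) : ℕ := ∑ i, z i

/-- Factorization homomorphism of `M_n = ⟨n, n+r_1, ..., n+r_k⟩`. -/
def piM (k n : ℕ) (r : Fin (k + 1) → ℕ) (z : Fin (k + 2) → ℕ) : ℕ :=
  z 0 * n + ∑ i : Fin (k + 1), z i.succ * (n + r i)

/-- Two factorizations of `β` lie in the same connected component of the factorization
graph `∇_β`: there is a path of factorizations of `β`, consecutive ones sharing a
common positive coordinate. -/
def SameComp {m : ℕ} (π : (Fin m → ℕ) → ℕ) (β : ℕ) :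
    (Fin m → ℕ) → (Fin m → ℕ) → Prop :=
  Relation.ReflTransGen (fun a b => π a = β ∧ π b = β ∧ ∃ i, 0 < a i ∧ 0 < b i)

/-- `β` is a Betti element: its factorization graph is disconnected. -/
def IsBetti {m : ℕ} (π : (Fin m → ℕ) → ℕ) (β : ℕ) : Prop :=
  ∃ z z', π z = β ∧ π z' = β ∧ ¬ SameComp π β z z'

/-- The map `Φ_n` on pairs of factorizations. -/
def Phi (k : ℕ) (p : (Fin (k + 2) → ℕ) × (Fin (k + 2) → ℕ)) :
    (Fin (k + 2) → ℕ) × (Fin (k + 2) → ℕ) :=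
  if vlen p.2 < vlen p.1 then
    (p.1 + (vlen p.1 - vlen p.2) • Pi.single (0 : Fin (k + 2)) 1,
     p.2 + (vlen p.1 - vlen p.2) • Pi.single (Fin.last (k + 1)) 1)
  else if vlen p.1 < vlen p.2 then
    (p.1 + (vlen p.2 - vlen p.1) • Pi.single (Fin.last (k + 1)) 1,
     p.2 + (vlen p.2 - vlen p.1) • Pi.single (0 : Fin (k + 2)) 1)
  else p

/-- The congruence generated by a set of relations `ρ`. -/
inductive CongGen {m : ℕ} (ρ : Set ((Fin m → ℕ) × (Fin m → ℕ))) :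
    (Fin m → ℕ) → (Fin m → ℕ) → Prop
  | of {z z'} : (z, z') ∈ ρ → CongGen ρ z z'
  | refl (z) : CongGen ρ z z
  | symm {z z'} : CongGen ρ z z' → CongGen ρ z' z
  | trans {x y z} : CongGen ρ x y → CongGen ρ y z → CongGen ρ x z
  | add {z z'} (u) : CongGen ρ z z' → CongGen ρ (z + u) (z' + u)

/-- `ρ` is a presentation for the monoid with factorization homomorphism `π`. -/
def IsPres {m : ℕ} (π : (Fin m → ℕ) → ℕ)
    (ρ : Set ((Fin m → ℕ) × (Fin m → ℕ))) : Prop :=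
  (∀ p ∈ ρ, π p.1 = π p.2) ∧ ∀ z z', CongGen ρ z z' ↔ π z = π z'

/-- `ρ` is a minimal presentation. -/
def IsMinPres {m : ℕ} (π : (Fin m → ℕ) → ℕ)
    (ρ : Set ((Fin m → ℕ) × (Fin m → ℕ))) : Prop :=
  IsPres π ρ ∧ ∀ ρ' ⊆ ρ, IsPres π ρ' → ρ' = ρ

/-- Primitivity of `M_n`: the gcd of the generators is 1. -/
def Primitive (k n : ℕ) (r : Fin (k + 1) → ℕ) : Prop :=
  Nat.gcd n (Finset.univ.gcd fun i : Fin (k + 1) => n + r i) = 1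

/-- Distance between two factorizations. -/
def fdist {m : ℕ} (z z' : Fin m → ℕ) : ℕ :=
  max (∑ i, (z i - min (z i) (z' i))) (∑ i, (z' i - min (z i) (z' i)))

section VectorArithmetic

variable {m : ℕ}

theorem vlen_eq_dotProduct (z : Fin m → ℕ) : vlen z = z ⬝ᵥ 1 :=
  (dotProduct_one z).symm

theorem vlen_add (a b : Fin m → ℕ) : vlen (a + b) = vlen a + vlen b := by
  simp only [vlen_eq_dotProduct, add_dotProduct]

theorem vlen_single (j : Fin m) (c : ℕ) : vlen (Pi.single j c) = c := by
  simp only [vlen_eq_dotProduct, single_dotProduct, Pi.one_apply, mul_one]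

theorem exists_pos_of_vlen_pos {z : Fin m → ℕ} (hz : 0 < vlen z) : ∃ i, 0 < z i := by
  obtain ⟨i, -, hi⟩ := exists_ne_zero_of_sum_ne_zero hz.ne'
  exact ⟨i, Nat.pos_of_ne_zero hi⟩

theorem dotProduct_le_vlen_mul {ρ : Fin m → ℕ} {R : ℕ} (hρ : ∀ j, ρ j ≤ R) (z : Fin m → ℕ) :
    z ⬝ᵥ ρ ≤ vlen z * R := by
  rw [vlen, sum_mul]
  exact sum_le_sum fun j _ => Nat.mul_le_mul_left _ (hρ j)

end VectorArithmetic

section ZeroSum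

theorem exists_nonempty_subset_dvd_sum {ι : Type*} {N : ℕ} (hN : 0 < N) {s : Finset ι}
    (hs : N ≤ #s) (g : ι → ℕ) : ∃ t ⊆ s, t.Nonempty ∧ N ∣ ∑ i ∈ t, g i := by
  -- Pad `s` with `N - 1` zeros: the `N` terms given by Erdős–Ginzburg–Ziv cannot all be padding.
  obtain ⟨t, hts, htN, hdvd⟩ := Int.erdos_ginzburg_ziv (n := N)
    (s := s.disjSum (univ : Finset (Fin (N - 1)))) (Sum.elim (fun i => (g i : ℤ)) 0)
    (by rw [card_disjSum, card_univ, Fintype.card_fin]; omega)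
  refine ⟨t.toLeft, (subset_disjSum.1 hts).1, card_pos.1 ?_, ?_⟩
  · have hright : #t.toRight ≤ N - 1 := by simpa using card_le_univ t.toRight
    have := t.card_toLeft_add_card_toRight
    omega
  · rw [← t.toLeft_disjSum_toRight, sum_disjSum] at hdvd
    simpa [← Nat.cast_sum, Int.natCast_dvd_natCast] using hdvd

theorem exists_le_dvd_dotProduct {m N : ℕ} (hN : 0 < N) (ρ : Fin m → ℕ) {z : Fin m → ℕ}
    {J : Finset (Fin m)} (hJ : N ≤ ∑ j ∈ J, z j) :
    ∃ u ≤ z, (∀ j ∉ J, u j = 0) ∧ 0 < vlen u ∧ N ∣ u ⬝ᵥ ρ := by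
  obtain ⟨t, hts, htne, hdvd⟩ := exists_nonempty_subset_dvd_sum hN
    (s := J.sigma fun j => (univ : Finset (Fin (z j))))
    (by simpa only [card_sigma, card_univ, Fintype.card_fin] using hJ) fun x => ρ x.1
  refine ⟨fun j => #{x ∈ t | x.1 = j}, fun j => ?_, fun j hj => ?_, ?_, ?_⟩
  · have hfiber : {x ∈ t | x.1 = j} ⊆ (univ : Finset (Fin (z j))).map (.sigmaMk j) := fun x hx => by
      obtain ⟨-, rfl⟩ := mem_filter.1 hx
      exact mem_map_of_mem _ (mem_univ x.2)
    simpa only [card_map, card_univ, Fintype.card_fin] using card_le_card hfiber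
  · refine card_eq_zero.2 (filter_eq_empty_iff.2 fun x hx hxj => hj ?_)
    exact hxj ▸ (mem_sigma.1 (hts hx)).1
  · rw [vlen, ← card_eq_sum_card_fiberwise fun _ _ => mem_coe.2 (mem_univ _)]
    exact htne.card_pos
  · convert hdvd
    rw [← sum_fiberwise t Sigma.fst fun x => ρ x.1]
    refine sum_congr rfl fun j _ => ?_
    rw [sum_congr rfl fun x hx => congrArg ρ (mem_filter.1 hx).2, sum_const, smul_eq_mul]

end ZeroSum

/-- Two factorizations are linked in `S` if they lie in the same component of the graph on `S` whose
edges join vectors sharing a positive coordinate. -/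
def CoordLinked {m : ℕ} (S : Set (Fin m → ℕ)) : (Fin m → ℕ) → (Fin m → ℕ) → Prop :=
  Relation.ReflTransGen fun a b => a ∈ S ∧ b ∈ S ∧ ∃ i, 0 < a i ∧ 0 < b i

/-- The graph on `S` whose edges join vectors sharing a positive coordinate is connected. -/
def CoordConnected {m : ℕ} (S : Set (Fin m → ℕ)) : Prop := ∀ a ∈ S, ∀ b ∈ S, CoordLinked S a b

theorem isBetti_iff_not_coordConnected {m : ℕ} {π : (Fin m → ℕ) → ℕ} {β : ℕ} :
    IsBetti π β ↔ ¬ CoordConnected {z | π z = β} := by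
  simp only [CoordConnected, not_forall, Set.mem_ofPred_eq]
  exact ⟨fun ⟨z, z', hz, hz', h⟩ => ⟨z, hz, z', hz', h⟩,
    fun ⟨z, hz, z', hz', h⟩ => ⟨z, z', hz, hz', h⟩⟩

theorem CoordLinked.mono {m : ℕ} {S T : Set (Fin m → ℕ)} (hST : S ⊆ T) {a b : Fin m → ℕ}
    (h : CoordLinked S a b) : CoordLinked T a b :=
  Relation.ReflTransGen.mono (fun _ _ ⟨ha, hb, hshare⟩ => ⟨hST ha, hST hb, hshare⟩) _ _ h

theorem CoordLinked.symm {m : ℕ} {S : Set (Fin m → ℕ)} {a b : Fin m → ℕ}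
    (h : CoordLinked S a b) : CoordLinked S b a :=
  Relation.ReflTransGen.mono (fun _ _ ⟨hb, ha, i, hbi, hai⟩ => ⟨ha, hb, i, hai, hbi⟩) _ _ h.swap

theorem coordLinked_of_share {m : ℕ} {S : Set (Fin m → ℕ)} {a b a' b' : Fin m → ℕ} {c : Fin m}
    (ha : a ∈ S) (hb : b ∈ S) (ha' : a' ∈ S) (hb' : b' ∈ S) (haa' : ∃ i, 0 < a i ∧ 0 < a' i)
    (hbb' : ∃ i, 0 < b i ∧ 0 < b' i) (hac : 0 < a' c) (hbc : 0 < b' c) : CoordLinked S a b :=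
  have hlink {x x' : Fin m → ℕ} (hx : x ∈ S) (hx' : x' ∈ S) (h : ∃ i, 0 < x i ∧ 0 < x' i) :
      CoordLinked S x x' := .single ⟨hx, hx', h⟩
  ((hlink ha ha' haa').trans (hlink ha' hb' ⟨c, hac, hbc⟩)).trans (hlink hb hb' hbb').symm

/-- The factorization homomorphism `z ↦ ∑ i, z i * (n + ρ i)` of `⟨n + ρ 0, n + ρ 1, …⟩`. -/
def shiftHom {m : ℕ} (ρ : Fin m → ℕ) (n : ℕ) (z : Fin m → ℕ) : ℕ := vlen z * n + z ⬝ᵥ ρ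

theorem add_dotProduct_le_of_vlen_lt {m n : ℕ} {ρ a b : Fin m → ℕ}
    (hab : shiftHom ρ n a = shiftHom ρ n b) (hlt : vlen a < vlen b) :
    n + b ⬝ᵥ ρ ≤ a ⬝ᵥ ρ := by
  have : (vlen a + 1) * n ≤ vlen b * n := Nat.mul_le_mul_right n hlt
  rw [shiftHom, shiftHom] at hab
  linarith

/-- The factorizations of `(L, w)` in the homogenized monoid generated by the pairs `(1, ρ i)`:
all factorizations of length `L` of a fixed element of `⟨n + ρ 0, n + ρ 1, …⟩`. -/
def fiber {m : ℕ} (ρ : Fin m → ℕ) (L w : ℕ) : Set (Fin m → ℕ) :=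
  {z | vlen z = L ∧ z ⬝ᵥ ρ = w}

theorem shiftHom_of_mem_fiber {m L w : ℕ} {ρ z : Fin m → ℕ} (n : ℕ) (hz : z ∈ fiber ρ L w) :
    shiftHom ρ n z = L * n + w := by
  rw [shiftHom, hz.1, hz.2]

theorem add_mem_fiber {m : ℕ} {ρ : Fin m → ℕ} {L L' w w' : ℕ} {z z' : Fin m → ℕ}
    (hz : z ∈ fiber ρ L w) (hz' : z' ∈ fiber ρ L' w') : z + z' ∈ fiber ρ (L + L') (w + w') :=
  ⟨by rw [vlen_add, hz.1, hz'.1], by rw [add_dotProduct, hz.2, hz'.2]⟩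

theorem mem_fiber_of_add_mem_fiber {m : ℕ} {ρ : Fin m → ℕ} {L L' w w' : ℕ} {z z' : Fin m → ℕ}
    (h : z + z' ∈ fiber ρ (L + L') (w + w')) (hz' : z' ∈ fiber ρ L' w') : z ∈ fiber ρ L w := by
  obtain ⟨hlen, hwt⟩ := h
  rw [vlen_add, hz'.1] at hlen
  rw [add_dotProduct, hz'.2] at hwt
  exact ⟨Nat.add_right_cancel hlen, Nat.add_right_cancel hwt⟩

/-- The factorizations of length `L + i` of the element `(L + i + j) * n + w` of
`⟨n + ρ 0, n + ρ 1, …⟩`. -/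
def layer {m : ℕ} (ρ : Fin m → ℕ) (n L w i j : ℕ) : Set (Fin m → ℕ) := fiber ρ (L + i) (w + j * n)

/-- The generators occurring in some factorization of `S`. -/
def coordSupport {m : ℕ} (S : Set (Fin m → ℕ)) : Set (Fin m) := {i | ∃ z ∈ S, 0 < z i}

theorem mem_layer_iff {m n L w i j : ℕ} {ρ z : Fin m → ℕ} :
    z ∈ layer ρ n L w i j ↔ vlen z = L + i ∧ shiftHom ρ n z = (L + (i + j)) * n + w := by
  refine and_congr_right fun hlen => ?_
  rw [shiftHom, hlen]
  constructor <;> intro h <;> linarith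

/-- The combinatorial data of a Betti element of `⟨n + ρ 0, n + ρ 1, …⟩` with factorizations of
different lengths: the element is `(L + l) * n + w`, its factorizations have the two lengths `L`
and `L + l` only, and no generator occurs at both lengths. -/
structure IsTwoLength {m : ℕ} (ρ : Fin m → ℕ) (n L w l : ℕ) : Prop where
  pos : 0 < l
  nonempty_iff : ∀ i j, i + j = l → ((coordSupport (layer ρ n L w i j)).Nonempty ↔ i = 0 ∨ j = 0)
  disjoint : Disjoint (coordSupport (layer ρ n L w 0 l)) (coordSupport (layer ρ n L w l 0))

theorem coordSupport_nonempty {m : ℕ} {S : Set (Fin m → ℕ)} {z : Fin m → ℕ} (hz : z ∈ S)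
    (hpos : 0 < vlen z) : (coordSupport S).Nonempty :=
  (exists_pos_of_vlen_pos hpos).imp fun _ hi => ⟨z, hz, hi⟩

theorem nonempty_of_coordSupport_nonempty {m : ℕ} {S : Set (Fin m → ℕ)}
    (hS : (coordSupport S).Nonempty) : S.Nonempty :=
  let ⟨_, z, hz, _⟩ := hS
  ⟨z, hz⟩

theorem IsTwoLength.shortest_nonempty {m n L w l : ℕ} {ρ : Fin m → ℕ}
    (h : IsTwoLength ρ n L w l) : (fiber ρ L (w + l * n)).Nonempty :=
  nonempty_of_coordSupport_nonempty ((h.nonempty_iff 0 l (zero_add l)).2 (.inl rfl))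

theorem IsTwoLength.longest_nonempty {m n L w l : ℕ} {ρ : Fin m → ℕ}
    (h : IsTwoLength ρ n L w l) : (fiber ρ (L + l) w).Nonempty := by
  simpa only [layer, zero_mul, add_zero] using
    nonempty_of_coordSupport_nonempty ((h.nonempty_iff l 0 (add_zero l)).2 (.inr rfl))

theorem IsTwoLength.not_pos_of_pos {m n L w l : ℕ} {ρ a b : Fin m → ℕ} {c : Fin m}
    (h : IsTwoLength ρ n L w l) (ha : a ∈ fiber ρ L (w + l * n)) (hb : b ∈ fiber ρ (L + l) w)
    (hac : 0 < a c) : ¬ 0 < b c := fun hbc =>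
  Set.disjoint_left.1 h.disjoint ⟨a, ha, hac⟩
    ⟨b, by simpa only [layer, zero_mul, add_zero] using hb, hbc⟩

theorem IsTwoLength.of_coordSupport_layer_eq {m n n' L L' w l : ℕ} {ρ : Fin m → ℕ}
    (h : IsTwoLength ρ n L w l) (hsupp : ∀ i j, i + j = l →
      coordSupport (layer ρ n' L' w i j) = coordSupport (layer ρ n L w i j)) :
    IsTwoLength ρ n' L' w l where
  pos := h.pos
  nonempty_iff i j hij := by
    rw [hsupp i j hij]
    exact h.nonempty_iff i j hij
  disjoint := by
    rw [hsupp 0 l (zero_add l), hsupp l 0 (add_zero l)]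
    exact h.disjoint

/-- The types `(L, w, l)` of the Betti elements of `⟨n + ρ 0, n + ρ 1, …⟩`: the Betti element is
`(L + l) * n + w`, and its factorizations have the lengths `L` and `L + l`. The types with `l = 0`
do not depend on `n`. -/
def bettiTypes {m : ℕ} (ρ : Fin m → ℕ) (n : ℕ) : Set (ℕ × ℕ × ℕ) :=
  {(L, w, l) | l = 0 ∧ ¬ CoordConnected (fiber ρ L w) ∨ IsTwoLength ρ n L w l}

/-- The element `(L + l) * n + w` of type `(L, w, l)`. -/
def typeElement (n : ℕ) : ℕ × ℕ × ℕ → ℕ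
  | (L, w, l) => (L + l) * n + w

/-- How the type of a Betti element changes when `n` increases by the largest offset. -/
def shiftType : ℕ × ℕ × ℕ → ℕ × ℕ × ℕ
  | (L, w, l) => (L + l, w, l)

theorem shiftType_injective : Function.Injective shiftType := by
  rintro ⟨L, w, l⟩ ⟨L', w', l'⟩ heq
  simp only [shiftType, Prod.mk.injEq] at heq ⊢
  omega

/-- The offsets `0, r_1, …, r_k` of the generators `n, n + r_1, …, n + r_k`, in any order: the
smallest one `0` occurs only at `bot` and the largest one `R` only at `top`. -/
structure IsOffsets {m : ℕ} (ρ : Fin m → ℕ) (R : ℕ) (bot top : Fin m) : Prop where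
  pos_diam : 0 < R
  apply_bot : ρ bot = 0
  apply_top : ρ top = R
  pos : ∀ j ≠ bot, 0 < ρ j
  lt : ∀ j ≠ top, ρ j < R

/-- The number of summands of a factorization other than the two extreme generators. -/
def innerLen {m : ℕ} (bot top : Fin m) (z : Fin m → ℕ) : ℕ := ∑ j ∈ {bot, top}ᶜ, z j

theorem innerLen_comm {m : ℕ} (bot top : Fin m) (z : Fin m → ℕ) :
    innerLen bot top z = innerLen top bot z := by
  rw [innerLen, innerLen, pair_comm]

/-- The vector consisting of `a` copies of the generator `bot` and `b` copies of `top`. -/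
def ends {m : ℕ} (bot top : Fin m) (a b : ℕ) : Fin m → ℕ := Pi.single bot a + Pi.single top b

theorem innerLen_add {m : ℕ} (bot top : Fin m) (a b : Fin m → ℕ) :
    innerLen bot top (a + b) = innerLen bot top a + innerLen bot top b :=
  sum_add_distrib

theorem innerLen_ends {m : ℕ} (bot top : Fin m) (a b : ℕ) :
    innerLen bot top (ends bot top a b) = 0 := by
  refine sum_eq_zero fun j hj => ?_
  simp only [mem_compl, mem_insert, mem_singleton, not_or] at hj
  simp only [ends, Pi.add_apply, Pi.single_eq_of_ne hj.1, Pi.single_eq_of_ne hj.2, add_zero]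

theorem innerLen_le_vlen {m : ℕ} (bot top : Fin m) (z : Fin m → ℕ) :
    innerLen bot top z ≤ vlen z :=
  sum_le_univ_sum_of_nonneg fun _ => Nat.zero_le _

namespace IsOffsets

variable {m R : ℕ} {ρ : Fin m → ℕ} {bot top : Fin m}

theorem le (h : IsOffsets ρ R bot top) (j : Fin m) : ρ j ≤ R := by
  rcases eq_or_ne j top with rfl | hj
  · exact h.apply_top.le
  · exact (h.lt j hj).le

theorem le_mul_of_mem_fiber (h : IsOffsets ρ R bot top) {L w : ℕ} {z : Fin m → ℕ}
    (hz : z ∈ fiber ρ L w) : w ≤ L * R := by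
  simpa only [hz.1, hz.2] using dotProduct_le_vlen_mul h.le z

theorem bot_ne_top (h : IsOffsets ρ R bot top) : bot ≠ top := fun heq =>
  h.pos_diam.ne (by rw [← h.apply_bot, heq, h.apply_top])

theorem reflect (h : IsOffsets ρ R bot top) : IsOffsets (fun j => R - ρ j) R top bot where
  pos_diam := h.pos_diam
  apply_bot := by rw [h.apply_top, Nat.sub_self]
  apply_top := by rw [h.apply_bot, Nat.sub_zero]
  pos j hj := Nat.sub_pos_of_lt (h.lt j hj)
  lt j hj := Nat.sub_lt h.pos_diam (h.pos j hj)

theorem dotProduct_reflect (h : IsOffsets ρ R bot top) (z : Fin m → ℕ) :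
    (z ⬝ᵥ fun j => R - ρ j) + z ⬝ᵥ ρ = vlen z * R := by
  rw [← dotProduct_add, vlen, sum_mul]
  refine sum_congr rfl fun j _ => ?_
  rw [Pi.add_apply, Nat.sub_add_cancel (h.le j)]

theorem ends_mem_fiber (h : IsOffsets ρ R bot top) (a b : ℕ) :
    ends bot top a b ∈ fiber ρ (a + b) (b * R) := by
  constructor
  · rw [ends, vlen_add, vlen_single, vlen_single]
  · rw [ends, add_dotProduct, single_dotProduct, single_dotProduct, h.apply_bot, h.apply_top,
      mul_zero, zero_add]

section Concentration

-- Trade a zero-sum subfamily of the inner summands for extreme ones.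
theorem exists_innerLen_lt (h : IsOffsets ρ R bot top) {z : Fin m → ℕ}
    (hz : R ≤ innerLen bot top z) :
    ∃ z' ∈ fiber ρ (vlen z) (z ⬝ᵥ ρ), innerLen bot top z' < innerLen bot top z := by
  obtain ⟨u, huz, hu0, hupos, a, hua⟩ := exists_le_dvd_dotProduct h.pos_diam ρ hz
  have hinner : innerLen bot top u = vlen u :=
    sum_subset (subset_univ _) fun j _ hj => hu0 j hj
  have ha : a ≤ vlen u := by
    refine Nat.le_of_mul_le_mul_right ?_ h.pos_diam
    rw [mul_comm a, ← hua]
    exact dotProduct_le_vlen_mul h.le u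
  have hsplit : z - u + u = z := tsub_add_cancel_of_le huz
  have hu : u ∈ fiber ρ (vlen u - a + a) (a * R) :=
    ⟨(Nat.sub_add_cancel ha).symm, hua.trans (mul_comm R a)⟩
  refine ⟨z - u + ends bot top (vlen u - a) a, ?_, ?_⟩
  · have hmem : z - u + u ∈ fiber ρ (vlen (z - u + u)) ((z - u + u) ⬝ᵥ ρ) := ⟨rfl, rfl⟩
    rw [vlen_add, add_dotProduct, hu.1, hu.2] at hmem
    have := add_mem_fiber (mem_fiber_of_add_mem_fiber hmem hu) (h.ends_mem_fiber (vlen u - a) a)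
    rwa [← hu.1, ← hu.2, ← vlen_add, ← add_dotProduct, hsplit] at this
  · conv_rhs => rw [← hsplit]
    rw [innerLen_add, innerLen_add, innerLen_ends, hinner]
    omega

theorem exists_innerLen_lt_diam (h : IsOffsets ρ R bot top) (z : Fin m → ℕ) :
    ∃ z' ∈ fiber ρ (vlen z) (z ⬝ᵥ ρ), innerLen bot top z' < R := by
  induction hN : innerLen bot top z using Nat.strong_induction_on generalizing z with
  | _ N ih =>
    subst hN
    by_cases hz : innerLen bot top z < R
    · exact ⟨z, ⟨rfl, rfl⟩, hz⟩
    · obtain ⟨y, ⟨hlen, hwt⟩, hlt⟩ := h.exists_innerLen_lt (not_lt.1 hz)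
      simpa only [hlen, hwt] using ih _ hlt y rfl

theorem exists_pos_innerLen_le (h : IsOffsets ρ R bot top) {z : Fin m → ℕ} {i : Fin m}
    (hi : 0 < z i) :
    ∃ z' ∈ fiber ρ (vlen z) (z ⬝ᵥ ρ), 0 < z' i ∧ innerLen bot top z' ≤ R := by
  have hsplit : z - Pi.single i 1 + Pi.single i 1 = z :=
    tsub_add_cancel_of_le (update_le_iff.2 ⟨hi, fun _ _ => Nat.zero_le _⟩)
  obtain ⟨y, hy, hlt⟩ := h.exists_innerLen_lt_diam (z - Pi.single i 1)
  refine ⟨y + Pi.single i 1, ?_, by simp, ?_⟩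
  · have := add_mem_fiber hy (⟨rfl, rfl⟩ : Pi.single i 1 ∈ fiber ρ _ _)
    rwa [← vlen_add, ← add_dotProduct, hsplit] at this
  · have hsingle := innerLen_le_vlen bot top (Pi.single i 1)
    rw [vlen_single] at hsingle
    rw [innerLen_add]
    omega

theorem dotProduct_le (h : IsOffsets ρ R bot top) (z : Fin m → ℕ) :
    z ⬝ᵥ ρ ≤ z top * R + innerLen bot top z * (R - 1) := by
  rw [dotProduct, ← sum_add_sum_compl {bot, top}, sum_pair h.bot_ne_top, h.apply_bot, h.apply_top,
    mul_zero, zero_add, innerLen, sum_mul]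
  gcongr with j hj
  have hj' : j ≠ top := by rintro rfl; simp at hj
  exact Nat.le_pred_of_lt (h.lt j hj')

theorem lt_apply_top (h : IsOffsets ρ R bot top) {n l : ℕ} (hn : R ^ 2 < n + R) {z : Fin m → ℕ}
    (hz : innerLen bot top z ≤ R) (hl : l * R + n ≤ z ⬝ᵥ ρ) : l < z top := by
  by_contra! htop
  have hinner : R * (R - 1) < n := by
    rw [Nat.mul_sub, mul_one, ← sq]
    have := Nat.le_self_pow two_ne_zero R
    omega
  refine hl.not_gt ?_
  calc z ⬝ᵥ ρ ≤ z top * R + innerLen bot top z * (R - 1) := h.dotProduct_le z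
    _ ≤ l * R + R * (R - 1) := by gcongr
    _ < l * R + n := by gcongr

theorem lt_apply_bot (h : IsOffsets ρ R bot top) {n l : ℕ} (hn : R ^ 2 < n + R) {z : Fin m → ℕ}
    (hz : innerLen bot top z ≤ R) (hl : l * R + n + z ⬝ᵥ ρ ≤ vlen z * R) : l < z bot := by
  refine h.reflect.lt_apply_top hn (innerLen_comm bot top z ▸ hz) ?_
  have := h.dotProduct_reflect z
  omega

end Concentration

section Shift

theorem exists_pos_mem_layer_of_shift (h : IsOffsets ρ R bot top) {n L w i j : ℕ}
    (hn : R ^ 2 < n + R) (hw : w + (i + j) * n ≤ L * R) {y : Fin m → ℕ}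
    (hy : y ∈ layer ρ (n + R) (L + (i + j)) w i j) {x : Fin m} (hx : 0 < y x) :
    ∃ z ∈ layer ρ n L w i j, 0 < z x := by
  obtain ⟨y', ⟨hlen, hwt⟩, hx', hinner⟩ := h.exists_pos_innerLen_le hx
  rw [hy.1] at hlen
  rw [hy.2] at hwt
  have hbot : i = 0 ∨ i < y' bot := by
    refine i.eq_zero_or_pos.imp_right fun hi => h.lt_apply_bot hn hinner ?_
    rw [hlen, hwt]
    nlinarith
  have htop : j = 0 ∨ j < y' top := by
    refine j.eq_zero_or_pos.imp_right fun hj => h.lt_apply_top hn hinner ?_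
    rw [hwt]
    nlinarith
  have hends (c : Fin m) : ends bot top i j c = 0 ∨ ends bot top i j c < y' c := by
    rcases eq_or_ne c bot with rfl | hcb
    · simpa [ends, h.bot_ne_top] using hbot
    rcases eq_or_ne c top with rfl | hct
    · simpa [ends, h.bot_ne_top.symm] using htop
    · simp [ends, hcb, hct]
  have hsplit : y' - ends bot top i j + ends bot top i j = y' :=
    tsub_add_cancel_of_le fun c => (hends c).elim (fun h0 => h0.trans_le (Nat.zero_le _)) le_of_lt
  refine ⟨y' - ends bot top i j, ?_, ?_⟩
  · refine mem_fiber_of_add_mem_fiber ?_ (h.ends_mem_fiber i j)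
    rw [hsplit]
    exact ⟨by rw [hlen]; ring, by rw [hwt]; ring⟩
  · rw [Pi.sub_apply]
    have := hends x
    omega

theorem coordSupport_layer_shift (h : IsOffsets ρ R bot top) {n L w i j : ℕ}
    (hn : R ^ 2 < n + R) (hw : w + (i + j) * n ≤ L * R) :
    coordSupport (layer ρ (n + R) (L + (i + j)) w i j) = coordSupport (layer ρ n L w i j) := by
  refine Set.Subset.antisymm ?_ ?_
  · rintro x ⟨y, hy, hx⟩
    exact h.exists_pos_mem_layer_of_shift hn hw hy hx
  · rintro x ⟨z, hz, hx⟩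
    refine ⟨z + ends bot top i j, ?_, Nat.add_pos_left hx _⟩
    convert add_mem_fiber hz (h.ends_mem_fiber i j) using 1
    rw [layer]
    ring_nf

theorem isTwoLength_shift (h : IsOffsets ρ R bot top) {n L w l : ℕ} (hn : R ^ 2 < n + R) :
    IsTwoLength ρ (n + R) (L + l) w l ↔ IsTwoLength ρ n L w l := by
  have hsupp (hw : w + l * n ≤ L * R) (i j : ℕ) (hij : i + j = l) :
      coordSupport (layer ρ (n + R) (L + l) w i j) = coordSupport (layer ρ n L w i j) := by
    subst hij
    exact h.coordSupport_layer_shift hn hw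
  constructor <;> intro hT
  · obtain ⟨z, hz⟩ := hT.shortest_nonempty
    have hw : w + l * n ≤ L * R := by linarith [h.le_mul_of_mem_fiber hz]
    exact hT.of_coordSupport_layer_eq fun i j hij => (hsupp hw i j hij).symm
  · obtain ⟨z, hz⟩ := hT.shortest_nonempty
    exact hT.of_coordSupport_layer_eq (hsupp (h.le_mul_of_mem_fiber hz))

end Shift

section Linking

variable {n : ℕ}

theorem exists_share_pos_ends (h : IsOffsets ρ R bot top) (hn : R ^ 2 < n + R) {a : Fin m → ℕ}
    (ha : 0 < vlen a) :
    ∃ a' ∈ fiber ρ (vlen a) (a ⬝ᵥ ρ), (∃ i, 0 < a i ∧ 0 < a' i) ∧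
      (n + a ⬝ᵥ ρ ≤ vlen a * R → 0 < a' bot) ∧ (n ≤ a ⬝ᵥ ρ → 0 < a' top) := by
  obtain ⟨i, hi⟩ := exists_pos_of_vlen_pos ha
  obtain ⟨a', ha', hi', hinner⟩ := h.exists_pos_innerLen_le hi
  refine ⟨a', ha', ⟨i, hi, hi'⟩, fun hle => ?_, fun hle => ?_⟩
  · exact h.lt_apply_bot hn hinner (by rwa [zero_mul, zero_add, ha'.1, ha'.2])
  · exact h.lt_apply_top hn hinner (by rwa [zero_mul, zero_add, ha'.2])

theorem vlen_pos_of_vlen_lt (h : IsOffsets ρ R bot top) (hn : R ^ 2 < n + R) {a b : Fin m → ℕ}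
    (hab : shiftHom ρ n a = shiftHom ρ n b) (hlt : vlen a < vlen b) : 0 < vlen a := by
  have hn0 : 0 < n := by nlinarith [h.pos_diam]
  have hle := dotProduct_le_vlen_mul h.le a
  have hgap := add_dotProduct_le_of_vlen_lt hab hlt
  by_contra! ha
  rw [Nat.le_zero.1 ha, zero_mul] at hle
  omega

theorem exists_share_top_pos (h : IsOffsets ρ R bot top) (hn : R ^ 2 < n + R) {a b : Fin m → ℕ}
    (hab : shiftHom ρ n a = shiftHom ρ n b) (hlt : vlen a < vlen b) :
    ∃ a' ∈ fiber ρ (vlen a) (a ⬝ᵥ ρ), (∃ i, 0 < a i ∧ 0 < a' i) ∧ 0 < a' top := by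
  obtain ⟨a', ha', hshare, -, htop⟩ := h.exists_share_pos_ends hn (h.vlen_pos_of_vlen_lt hn hab hlt)
  exact ⟨a', ha', hshare, 
    htop ((Nat.le_add_right _ _).trans (add_dotProduct_le_of_vlen_lt hab hlt))⟩

theorem exists_share_bot_pos (h : IsOffsets ρ R bot top) (hn : R ^ 2 < n + R) {a b : Fin m → ℕ}
    (hab : shiftHom ρ n a = shiftHom ρ n b) (hlt : vlen a < vlen b) :
    ∃ b' ∈ fiber ρ (vlen b) (b ⬝ᵥ ρ), (∃ i, 0 < b i ∧ 0 < b' i) ∧ 0 < b' bot := by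
  obtain ⟨b', hb', hshare, hbot, -⟩ := h.exists_share_pos_ends hn (Nat.zero_lt_of_lt hlt)
  refine ⟨b', hb', hshare, hbot ?_⟩
  calc n + b ⬝ᵥ ρ ≤ a ⬝ᵥ ρ := add_dotProduct_le_of_vlen_lt hab hlt
    _ ≤ vlen a * R := dotProduct_le_vlen_mul h.le a
    _ ≤ vlen b * R := by gcongr

theorem coordLinked_of_vlen_lt (h : IsOffsets ρ R bot top) (hn : R ^ 2 < n + R)
    {S : Set (Fin m → ℕ)} (hS : ∀ z ∈ S, fiber ρ (vlen z) (z ⬝ᵥ ρ) ⊆ S) {a b c : Fin m → ℕ}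
    (ha : a ∈ S) (hb : b ∈ S) (hac : shiftHom ρ n a = shiftHom ρ n c)
    (hbc : shiftHom ρ n b = shiftHom ρ n c) (hltac : vlen a < vlen c) (hltbc : vlen b < vlen c) :
    CoordLinked S a b := by
  obtain ⟨a', ha', hshare_a, hpos_a⟩ := h.exists_share_top_pos hn hac hltac
  obtain ⟨b', hb', hshare_b, hpos_b⟩ := h.exists_share_top_pos hn hbc hltbc
  exact coordLinked_of_share ha hb (hS a ha ha') (hS b hb hb') hshare_a hshare_b hpos_a hpos_b

theorem coordLinked_of_lt_vlen (h : IsOffsets ρ R bot top) (hn : R ^ 2 < n + R)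
    {S : Set (Fin m → ℕ)} (hS : ∀ z ∈ S, fiber ρ (vlen z) (z ⬝ᵥ ρ) ⊆ S) {a b c : Fin m → ℕ}
    (ha : a ∈ S) (hb : b ∈ S) (hca : shiftHom ρ n c = shiftHom ρ n a)
    (hcb : shiftHom ρ n c = shiftHom ρ n b) (hltca : vlen c < vlen a) (hltcb : vlen c < vlen b) :
    CoordLinked S a b := by
  obtain ⟨a', ha', hshare_a, hpos_a⟩ := h.exists_share_bot_pos hn hca hltca
  obtain ⟨b', hb', hshare_b, hpos_b⟩ := h.exists_share_bot_pos hn hcb hltcb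
  exact coordLinked_of_share ha hb (hS a ha ha') (hS b hb hb') hshare_a hshare_b hpos_a hpos_b

theorem coordConnected_fiber (h : IsOffsets ρ R bot top) (hn : R ^ 2 < n + R) {L w : ℕ}
    {y : Fin m → ℕ} (hy : shiftHom ρ n y = L * n + w) (hne : vlen y ≠ L) :
    CoordConnected (fiber ρ L w) := by
  intro a ha b hb
  have hsat : ∀ z ∈ fiber ρ L w, fiber ρ (vlen z) (z ⬝ᵥ ρ) ⊆ fiber ρ L w := by
    rintro z ⟨rfl, rfl⟩
    exact subset_rfl
  have hay := (shiftHom_of_mem_fiber n ha).trans hy.symm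
  have hby := (shiftHom_of_mem_fiber n hb).trans hy.symm
  rcases hne.lt_or_gt with hlt | hlt
  · exact h.coordLinked_of_lt_vlen hn hsat ha hb hay.symm hby.symm (ha.1 ▸ hlt) (hb.1 ▸ hlt)
  · exact h.coordLinked_of_vlen_lt hn hsat ha hb hay hby (ha.1 ▸ hlt) (hb.1 ▸ hlt)

end Linking

section BettiTypes

variable {n : ℕ}

theorem isTwoLength_of_not_coordLinked (h : IsOffsets ρ R bot top) (hn : R ^ 2 < n + R) {l : ℕ}
    {z z' : Fin m → ℕ} (hzz' : shiftHom ρ n z = shiftHom ρ n z') (hl : 0 < l)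
    (hlen : vlen z' = vlen z + l)
    (hnot : ¬ CoordLinked {y | shiftHom ρ n y = shiftHom ρ n z} z z') :
    IsTwoLength ρ n (vlen z) (z' ⬝ᵥ ρ) l := by
  set S : Set (Fin m → ℕ) := {y | shiftHom ρ n y = shiftHom ρ n z} with hS
  have hlt : vlen z < vlen z' := by omega
  have hsat : ∀ y ∈ S, fiber ρ (vlen y) (y ⬝ᵥ ρ) ⊆ S := fun y hy x hx =>
    (shiftHom_of_mem_fiber n hx).trans hy
  have hshort {y : Fin m → ℕ} (hy : y ∈ S) (hyz' : vlen y < vlen z') : CoordLinked S z y :=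
    h.coordLinked_of_vlen_lt hn hsat rfl hy hzz' (hy.trans hzz') hlt hyz'
  have hlong {y : Fin m → ℕ} (hy : y ∈ S) (hzy : vlen z < vlen y) : CoordLinked S y z' :=
    h.coordLinked_of_lt_vlen hn hsat hy hzz'.symm hy.symm hzz' hzy hlt
  have helement : shiftHom ρ n z = (vlen z + l) * n + z' ⬝ᵥ ρ := by rw [hzz', shiftHom, hlen]
  have hmem {i j : ℕ} (hij : i + j = l) {y : Fin m → ℕ} :
      y ∈ layer ρ n (vlen z) (z' ⬝ᵥ ρ) i j ↔ vlen y = vlen z + i ∧ y ∈ S := by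
    rw [mem_layer_iff, hij, ← helement, hS, Set.mem_ofPred_eq]
  refine ⟨hl, fun i j hij => ⟨?_, ?_⟩, Set.disjoint_left.2 ?_⟩
  · rintro ⟨x, y, hy, -⟩
    obtain ⟨hylen, hyS⟩ := (hmem hij).1 hy
    by_contra! hne
    exact hnot ((hshort hyS (by omega)).trans (hlong hyS (by omega)))
  · rintro (rfl | rfl)
    · exact coordSupport_nonempty ((hmem hij).2 ⟨rfl, rfl⟩) (h.vlen_pos_of_vlen_lt hn hzz' hlt)
    · exact coordSupport_nonempty ((hmem hij).2 ⟨by omega, hzz'.symm⟩) (Nat.zero_lt_of_lt hlt)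
  · rintro x ⟨a, ha, hax⟩ ⟨b, hb, hbx⟩
    obtain ⟨halen, haS⟩ := (hmem (zero_add l)).1 ha
    obtain ⟨hblen, hbS⟩ := (hmem (add_zero l)).1 hb
    exact hnot (((hshort haS (by omega)).tail ⟨haS, hbS, x, hax, hbx⟩).trans
      (hlong hbS (by omega)))

theorem vlen_eq_or_eq_of_isTwoLength (h : IsOffsets ρ R bot top) (hn : R ^ 2 < n + R)
    {L w l : ℕ} (hT : IsTwoLength ρ n L w l) {y : Fin m → ℕ}
    (hy : shiftHom ρ n y = (L + l) * n + w) : vlen y = L ∨ vlen y = L + l := by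
  obtain ⟨z, hz⟩ := hT.shortest_nonempty
  obtain ⟨z', hz'⟩ := hT.longest_nonempty
  have hzy : shiftHom ρ n z = shiftHom ρ n y := by
    rw [hy, shiftHom_of_mem_fiber n hz]
    ring
  have hz'y : shiftHom ρ n z' = shiftHom ρ n y := by rw [hy, shiftHom_of_mem_fiber n hz']
  have hzz' := hzy.trans hz'y.symm
  have hlt : vlen z < vlen z' := by
    rw [hz.1, hz'.1]
    exact Nat.lt_add_of_pos_right hT.pos
  have hshort : vlen z ≤ vlen y := by
    by_contra! hyz
    obtain ⟨a, ha, -, hpos_a⟩ := h.exists_share_bot_pos hn hzy.symm hyz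
    obtain ⟨b, hb, -, hpos_b⟩ := h.exists_share_bot_pos hn hzz' hlt
    rw [hz.1, hz.2] at ha
    rw [hz'.1, hz'.2] at hb
    exact hT.not_pos_of_pos ha hb hpos_a hpos_b
  have hlong : vlen y ≤ vlen z' := by
    by_contra! hyz'
    obtain ⟨a, ha, -, hpos_a⟩ := h.exists_share_top_pos hn hzz' hlt
    obtain ⟨b, hb, -, hpos_b⟩ := h.exists_share_top_pos hn hz'y hyz'
    rw [hz.1, hz.2] at ha
    rw [hz'.1, hz'.2] at hb
    exact hT.not_pos_of_pos ha hb hpos_a hpos_b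
  rw [hz.1] at hshort
  rw [hz'.1] at hlong
  obtain ⟨i, hi⟩ := Nat.exists_eq_add_of_le hshort
  obtain ⟨j, rfl⟩ : ∃ j, l = i + j := Nat.exists_eq_add_of_le (by omega)
  by_contra! hne
  have := (hT.nonempty_iff i j rfl).1
    (coordSupport_nonempty (mem_layer_iff.2 ⟨hi, hy⟩) (by omega))
  omega

theorem isBetti_of_isTwoLength (h : IsOffsets ρ R bot top) (hn : R ^ 2 < n + R) {L w l : ℕ}
    (hT : IsTwoLength ρ n L w l) : IsBetti (shiftHom ρ n) ((L + l) * n + w) := by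
  obtain ⟨z, hz⟩ := hT.shortest_nonempty
  obtain ⟨z', hz'⟩ := hT.longest_nonempty
  refine ⟨z, z', ?_, shiftHom_of_mem_fiber n hz', fun hlink => ?_⟩
  · rw [shiftHom_of_mem_fiber n hz]
    ring
  have hlen {y : Fin m → ℕ} (hzy : SameComp (shiftHom ρ n) ((L + l) * n + w) z y) :
      vlen y = L := by
    induction hzy with
    | refl => exact hz.1
    | @tail a b _ hab ih =>
      obtain ⟨ha, hb, c, hac, hbc⟩ := hab
      refine (h.vlen_eq_or_eq_of_isTwoLength hn hT hb).resolve_right fun hblen => ?_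
      exact Set.disjoint_left.1 hT.disjoint
        ⟨a, mem_layer_iff.2 ⟨ih, by rwa [zero_add]⟩, hac⟩ ⟨b, mem_layer_iff.2 ⟨hblen, hb⟩, hbc⟩
  exact (Nat.lt_add_of_pos_right hT.pos).ne (hz'.1 ▸ hlen hlink).symm

theorem vlen_eq_of_not_coordConnected_fiber (h : IsOffsets ρ R bot top) (hn : R ^ 2 < n + R)
    {L w : ℕ} (hL : ¬ CoordConnected (fiber ρ L w)) {y : Fin m → ℕ}
    (hy : shiftHom ρ n y = L * n + w) : vlen y = L :=
  of_not_not fun hne => hL (h.coordConnected_fiber hn hy hne)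

theorem isBetti_of_not_coordConnected_fiber (h : IsOffsets ρ R bot top) (hn : R ^ 2 < n + R)
    {L w : ℕ} (hL : ¬ CoordConnected (fiber ρ L w)) : IsBetti (shiftHom ρ n) (L * n + w) := by
  have hfiber : {y | shiftHom ρ n y = L * n + w} = fiber ρ L w := by
    refine Set.Subset.antisymm (fun y hy => ?_) fun y hy => shiftHom_of_mem_fiber n hy
    have hlen := h.vlen_eq_of_not_coordConnected_fiber hn hL hy
    rw [Set.mem_ofPred_eq, shiftHom, hlen] at hy
    exact ⟨hlen, Nat.add_left_cancel hy⟩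
  rwa [isBetti_iff_not_coordConnected, hfiber]

theorem image_vlen_eq_pair (h : IsOffsets ρ R bot top) (hn : R ^ 2 < n + R) {L w l : ℕ}
    (ht : (L, w, l) ∈ bettiTypes ρ n) :
    vlen '' {y | shiftHom ρ n y = (L + l) * n + w} = {L, L + l} := by
  rcases ht with ⟨rfl, hL⟩ | hT
  · rw [add_zero, Set.pair_eq_singleton]
    refine Set.Subset.antisymm ?_ ?_
    · rintro _ ⟨y, hy, rfl⟩
      exact h.vlen_eq_of_not_coordConnected_fiber hn hL hy
    · obtain ⟨z, -, hz, -⟩ := h.isBetti_of_not_coordConnected_fiber hn hL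
      rintro _ rfl
      exact ⟨z, hz, h.vlen_eq_of_not_coordConnected_fiber hn hL hz⟩
  · refine Set.Subset.antisymm ?_ ?_
    · rintro _ ⟨y, hy, rfl⟩
      exact h.vlen_eq_or_eq_of_isTwoLength hn hT hy
    · obtain ⟨z, hz⟩ := hT.shortest_nonempty
      obtain ⟨z', hz'⟩ := hT.longest_nonempty
      rintro _ (rfl | rfl)
      · exact ⟨z, (shiftHom_of_mem_fiber n hz).trans (by ring), hz.1⟩
      · exact ⟨z', shiftHom_of_mem_fiber n hz', hz'.1⟩

theorem injOn_typeElement (h : IsOffsets ρ R bot top) (hn : R ^ 2 < n + R) :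
    Set.InjOn (typeElement n) (bettiTypes ρ n) := by
  rintro ⟨L, w, l⟩ ht ⟨L', w', l'⟩ ht' heq
  simp only [typeElement] at heq
  have hlen := h.image_vlen_eq_pair hn ht
  rw [heq, h.image_vlen_eq_pair hn ht', Set.pair_eq_pair_iff] at hlen
  obtain ⟨rfl, rfl⟩ : L = L' ∧ l = l' := by omega
  rw [Nat.add_left_cancel heq]

theorem isBetti_typeElement (h : IsOffsets ρ R bot top) (hn : R ^ 2 < n + R) {t : ℕ × ℕ × ℕ}
    (ht : t ∈ bettiTypes ρ n) : IsBetti (shiftHom ρ n) (typeElement n t) := by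
  obtain ⟨L, w, l⟩ := t
  rcases ht with ⟨rfl, hL⟩ | hT
  · exact h.isBetti_of_not_coordConnected_fiber hn hL
  · exact h.isBetti_of_isTwoLength hn hT

theorem exists_typeElement_eq (h : IsOffsets ρ R bot top) (hn : R ^ 2 < n + R) {β : ℕ}
    (hβ : IsBetti (shiftHom ρ n) β) : ∃ t ∈ bettiTypes ρ n, typeElement n t = β := by
  have htwo {z z' : Fin m → ℕ} (hzz' : shiftHom ρ n z = shiftHom ρ n z') (hlt : vlen z < vlen z')
      (hnot : ¬ CoordLinked {y | shiftHom ρ n y = shiftHom ρ n z} z z') :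
      ∃ t ∈ bettiTypes ρ n, typeElement n t = shiftHom ρ n z := by
    obtain ⟨l, hlen⟩ := Nat.exists_eq_add_of_le hlt.le
    have hl : 0 < l := by omega
    refine ⟨(vlen z, z' ⬝ᵥ ρ, l), .inr (h.isTwoLength_of_not_coordLinked hn hzz' hl hlen hnot), ?_⟩
    rw [typeElement, ← hlen, hzz', shiftHom]
  obtain ⟨z, z', rfl, hzz', hnot⟩ := hβ
  rcases lt_trichotomy (vlen z) (vlen z') with hlt | heq | hgt
  · exact htwo hzz'.symm hlt hnot
  · have hwt : z' ⬝ᵥ ρ = z ⬝ᵥ ρ := by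
      rw [shiftHom, shiftHom, heq] at hzz'
      exact Nat.add_left_cancel hzz'
    refine ⟨(vlen z, z ⬝ᵥ ρ, 0), .inl ⟨rfl, fun hconn => hnot ?_⟩, rfl⟩
    exact (hconn z ⟨rfl, rfl⟩ z' ⟨heq.symm, hwt⟩).mono fun y hy => shiftHom_of_mem_fiber n hy
  · rw [← hzz'] at hnot ⊢
    exact htwo hzz' hgt fun hlink => hnot hlink.symm

theorem ncard_setOf_isBetti (h : IsOffsets ρ R bot top) (hn : R ^ 2 < n + R) :
    {β | IsBetti (shiftHom ρ n) β}.ncard = (bettiTypes ρ n).ncard := by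
  have himage : {β | IsBetti (shiftHom ρ n) β} = typeElement n '' bettiTypes ρ n :=
    Set.Subset.antisymm (fun _ hβ => h.exists_typeElement_eq hn hβ)
      (Set.image_subset_iff.2 fun _ ht => h.isBetti_typeElement hn ht)
  rw [himage, (h.injOn_typeElement hn).ncard_image]

theorem image_shiftType_bettiTypes (h : IsOffsets ρ R bot top) (hn : R ^ 2 < n + R) :
    shiftType '' bettiTypes ρ n = bettiTypes ρ (n + R) := by
  refine Set.Subset.antisymm ?_ ?_
  · rintro _ ⟨⟨L, w, l⟩, ⟨rfl, hL⟩ | hT, rfl⟩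
    · exact .inl ⟨rfl, hL⟩
    · exact .inr ((h.isTwoLength_shift hn).2 hT)
  · rintro ⟨L, w, l⟩ (⟨rfl, hL⟩ | hT)
    · exact ⟨(L, w, 0), .inl ⟨rfl, hL⟩, rfl⟩
    · have hle : l ≤ L := by
        obtain ⟨z, hz⟩ := hT.shortest_nonempty
        refine Nat.le_of_mul_le_mul_right ?_ h.pos_diam
        linarith [h.le_mul_of_mem_fiber hz, Nat.zero_le (l * n)]
      obtain ⟨L, rfl⟩ := Nat.exists_eq_add_of_le' hle
      exact ⟨(L, w, l), .inr ((h.isTwoLength_shift hn).1 hT), rfl⟩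

theorem ncard_setOf_isBetti_shift (h : IsOffsets ρ R bot top) (hn : R ^ 2 < n + R) :
    {β | IsBetti (shiftHom ρ (n + R)) β}.ncard = {β | IsBetti (shiftHom ρ n) β}.ncard := by
  rw [h.ncard_setOf_isBetti (Nat.lt_add_right R hn), h.ncard_setOf_isBetti hn,
    ← h.image_shiftType_bettiTypes hn, Set.ncard_image_of_injective _ shiftType_injective]

end BettiTypes

end IsOffsets

theorem piM_eq_shiftHom (k n : ℕ) (r : Fin (k + 1) → ℕ) :
    piM k n r = shiftHom (Fin.cons 0 r : Fin (k + 2) → ℕ) n := by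
  funext z
  simp only [piM, shiftHom, vlen, dotProduct, Fin.sum_univ_succ (n := k + 1), Fin.cons_zero,
    Fin.cons_succ, mul_add, sum_add_distrib, add_mul, sum_mul, mul_zero, zero_add, add_assoc]

theorem isOffsets_cons_zero {k : ℕ} {r : Fin (k + 1) → ℕ} (hpos : ∀ i, 0 < r i)
    (hlast : ∀ i ≠ Fin.last k, r i < r (Fin.last k)) :
    IsOffsets (Fin.cons 0 r : Fin (k + 2) → ℕ) (r (Fin.last k)) 0 (Fin.last (k + 1)) where
  pos_diam := hpos _
  apply_bot := rfl
  apply_top := rfl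
  pos j hj := by
    obtain ⟨i, rfl⟩ := Fin.exists_succ_eq.2 hj
    exact hpos i
  lt j hj := by
    cases j using Fin.cases with
    | zero => exact hpos _
    | succ i => exact hlast i fun hi => hj (congrArg Fin.succ hi)

theorem stmt12_general (k : ℕ) (r : Fin (k + 1) → ℕ) (hpos : ∀ i, 0 < r i)
    (hlast : ∀ i ≠ Fin.last k, r i < r (Fin.last k)) (n : ℕ)
    (hn : r (Fin.last k) ^ 2 < n + r (Fin.last k)) :
    {β | IsBetti (piM k (n + r (Fin.last k)) r) β}.ncard = {β | IsBetti (piM k n r) β}.ncard := by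
  rw [piM_eq_shiftHom, piM_eq_shiftHom]
  exact (isOffsets_cons_zero hpos hlast).ncard_setOf_isBetti_shift hn

/-- The number of Betti elements of `M_n` is `r_k`-periodic for `n > r_k²`. -/
theorem stmt12 (k : ℕ) (r : Fin (k + 1) → ℕ) (hmono : StrictMono r) (hpos : 0 < r 0)
    (n : ℕ) (hn : r (Fin.last k) ^ 2 < n)
    (hprim : Primitive k n r) (hprim' : Primitive k (n + r (Fin.last k)) r) :
    {β | IsBetti (piM k (n + r (Fin.last k)) r) β}.ncard
      = {β | IsBetti (piM k n r) β}.ncard :=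
  stmt12_general k r (fun i => hpos.trans_le (hmono.monotone (Fin.zero_le i)))
    (fun _ hi => hmono (Fin.lt_last_iff_ne_last.2 hi)) n (Nat.lt_add_right _ hn)
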